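/- arXiv:2107.01689 — 4 statements merged into one kernel-verified Lean document; each statement's English description precedes it below -/
import Mathlib

section
/- For every R > 0 and every policy a ∈ [0,1], the maximum regret nature can impose equals R times max(a, 1−a): sup over p ∈ [0,1]×[0,1] of L_R(a, p) = R·max(a, 1−a). -/
/-- Nature's parameter space: the unit square `[0,1] × [0,1]`. -/
def unitSq : Set (ℝ × ℝ) := Set.Icc 0 1 ×ˢ Set.Icc 0 1

/-- Agent's expected reward `G_R(a, p) = R·(a·p_A + (1 − a)·p_B)`. -/
noncomputable def reward (R a : ℝ) (p : ℝ × ℝ) : ℝ := R * (a * p.1 + (1 - a) * p.2)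

/-- Regret `L_R(a, p) = R·max(p_A, p_B) − G_R(a, p)`. -/
noncomputable def regret (R a : ℝ) (p : ℝ × ℝ) : ℝ := R * max p.1 p.2 - reward R a p

/-- for every `R > 0` and policy `a ∈ [0,1]`, the maximum regret nature can
impose equals `R · max(a, 1 − a)`. -/
theorem max_regret_eq (R a : ℝ) (hR : 0 < R) (ha : a ∈ Set.Icc (0 : ℝ) 1) :
    sSup (regret R a '' unitSq) = R * max a (1 - a) := by
  obtain ⟨h0, h1⟩ := ha
  apply IsGreatest.csSup_eq
  constructor
  · rcases le_total a (1 - a) with h | h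
    · refine ⟨(1, 0), by simp [unitSq], ?_⟩
      rw [max_eq_right h]
      simp [regret, reward]
      ring
    · refine ⟨(0, 1), by simp [unitSq], ?_⟩
      rw [max_eq_left h]
      simp [regret, reward]
      ring
  · rintro _ ⟨⟨x, y⟩, ⟨⟨hx0, hx1⟩, ⟨hy0, hy1⟩⟩, rfl⟩
    simp only [regret, reward] at *
    rw [← mul_sub]
    apply mul_le_mul_of_nonneg_left _ hR.le
    rcases le_total x y with h | h
    · rw [max_eq_right h]
      refine le_trans ?_ (le_max_left _ _)
      nlinarith [mul_nonneg h0 hx0, mul_nonneg h0 (sub_nonneg.2 hy1)]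
    · rw [max_eq_left h]
      refine le_trans ?_ (le_max_right _ _)
      nlinarith [mul_nonneg (sub_nonneg.2 h1) hy0, mul_nonneg (sub_nonneg.2 h1) (sub_nonneg.2 hx1)]
end

section
/- For every R > 0, the minimax regret of the instance equals R/2: min over a ∈ [0,1] of (sup over p ∈ [0,1]×[0,1] of L_R(a, p)) = R/2, and the minimum is attained uniquely at a = 1/2. -/
/-- Max regret of policy `a`: `sup_{p ∈ [0,1]²} L_R(a, p)`. -/
noncomputable def maxRegret (R a : ℝ) : ℝ := sSup (regret R a '' unitSq)

theorem maxRegret_eq (R a : ℝ) (hR : 0 < R) (h0 : 0 ≤ a) (h1 : a ≤ 1) :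
    maxRegret R a = R * max a (1 - a) := by
  have hg : IsGreatest (regret R a '' unitSq) (R * max a (1 - a)) := by
    constructor
    · rcases le_total a (1 - a) with h | h
      · refine ⟨(1, 0), ?_, ?_⟩
        · simp [unitSq]
        · simp only [regret, reward]
          rw [max_eq_right h, max_eq_left (by norm_num)]
          ring
      · refine ⟨(0, 1), ?_, ?_⟩
        · simp [unitSq]
        · simp only [regret, reward]
          rw [max_eq_left h, max_eq_right (by norm_num)]
          ring
    · rintro _ ⟨⟨x, y⟩, ⟨⟨hx0, hx1⟩, ⟨hy0, hy1⟩⟩, rfl⟩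
      simp only [regret, reward] at *
      rw [← mul_sub]
      apply mul_le_mul_of_nonneg_left _ hR.le
      rcases le_total x y with h | h
      · rw [max_eq_right h]
        refine le_trans ?_ (le_max_left _ _)
        nlinarith [mul_nonneg h0 hx0, mul_nonneg h0 (sub_nonneg.2 hy1)]
      · rw [max_eq_left h]
        refine le_trans ?_ (le_max_right _ _)
        have h2 : 0 ≤ 1 - a := by linarith
        nlinarith [mul_nonneg h2 hy0, mul_nonneg h2 (sub_nonneg.2 hx1)]
  exact hg.csSup_eq

/-- for every `R > 0`, the minimax regret equals `R/2`
(`R/2` is the least value of `a ↦ maxRegret R a` over `a ∈ [0,1]` and is attained),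
and the minimum is attained uniquely at `a = 1/2`. -/
theorem minimax_regret (R : ℝ) (hR : 0 < R) :
    IsLeast ((fun a => maxRegret R a) '' Set.Icc (0 : ℝ) 1) (R / 2) ∧
    maxRegret R (1 / 2) = R / 2 ∧
    ∀ a ∈ Set.Icc (0 : ℝ) 1, maxRegret R a = R / 2 → a = 1 / 2 := by
  have hhalf : maxRegret R (1 / 2) = R / 2 := by
    rw [maxRegret_eq R _ hR (by norm_num) (by norm_num)]
    norm_num
    ring
  refine ⟨⟨⟨1 / 2, ⟨by norm_num, by norm_num⟩, hhalf⟩, ?_⟩, hhalf, ?_⟩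
  · rintro _ ⟨a, ⟨h0, h1⟩, rfl⟩
    simp only
    rw [maxRegret_eq R a hR h0 h1]
    have := le_max_left a (1 - a)
    have := le_max_right a (1 - a)
    nlinarith
  · rintro a ⟨h0, h1⟩ h
    rw [maxRegret_eq R a hR h0 h1] at h
    have hm : max a (1 - a) = 1 / 2 := by
      apply mul_left_cancel₀ hR.ne'
      linarith
    have := le_max_left a (1 - a)
    have := le_max_right a (1 - a)
    linarith
end

section
/- For every R ≥ 1, in the modified instance the policy a = 1/2 has maximum regret equal to R/2: sup over p ∈ [0,1]×[0,1] of L'_R(1/2, p) = R/2. Consequently, the minimax regret min over a ∈ [0,1] of sup over p of L'_R(a, p) is at most R/2, and the gap between the max regret of the reward-maximizing policy a = 1 and the minimax regret is at least R/2 − 1, which is unbounded as R → ∞. -/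
/-- Modified instance: agent's expected reward `G'_R(a, p) = a·p_A·R + (1 − a)·p_B·(R − 1)`. -/
noncomputable def reward' (R a : ℝ) (p : ℝ × ℝ) : ℝ := a * p.1 * R + (1 - a) * p.2 * (R - 1)

/-- Modified instance regret `L'_R(a, p) = max(p_A·R, p_B·(R − 1)) − G'_R(a, p)`. -/
noncomputable def regret' (R a : ℝ) (p : ℝ × ℝ) : ℝ :=
  max (p.1 * R) (p.2 * (R - 1)) - reward' R a p

/-- Max regret of policy `a` in the modified instance. -/
noncomputable def maxRegret' (R a : ℝ) : ℝ := sSup (regret' R a '' unitSq)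

/-- Minimax regret of the modified instance. -/
noncomputable def minimaxRegret' (R : ℝ) : ℝ :=
  sInf ((fun a => maxRegret' R a) '' Set.Icc (0 : ℝ) 1)

theorem maxRegret'_half (R : ℝ) (hR : 1 ≤ R) : maxRegret' R (1 / 2) = R / 2 := by
  apply IsGreatest.csSup_eq
  constructor
  · refine ⟨(1, 0), by simp [unitSq], ?_⟩
    simp only [regret', reward']
    rw [max_eq_left (by linarith)]
    ring
  · rintro _ ⟨⟨x, y⟩, hp, rfl⟩
    simp only [unitSq, Set.mem_prod, Set.mem_Icc] at hp
    obtain ⟨⟨h1, h2⟩, h3, h4⟩ := hp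
    simp only [regret', reward']
    have hx : 0 ≤ x * R := mul_nonneg h1 (by linarith)
    have hy : 0 ≤ y * (R - 1) := mul_nonneg h3 (by linarith)
    have hx' : x * R ≤ R := by nlinarith
    have hy' : y * (R - 1) ≤ R := by nlinarith
    rcases max_cases (x * R) (y * (R - 1)) with h | h <;> rw [h.1] <;> linarith

theorem maxRegret'_one (R : ℝ) (hR : 1 ≤ R) : maxRegret' R 1 = R - 1 := by
  apply IsGreatest.csSup_eq
  constructor
  · refine ⟨(0, 1), by simp [unitSq], ?_⟩
    simp only [regret', reward']
    rw [max_eq_right (by linarith)]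
    ring
  · rintro _ ⟨⟨x, y⟩, hp, rfl⟩
    simp only [unitSq, Set.mem_prod, Set.mem_Icc] at hp
    obtain ⟨⟨h1, h2⟩, h3, h4⟩ := hp
    simp only [regret', reward']
    have hx : 0 ≤ x * R := mul_nonneg h1 (by linarith)
    have hy' : y * (R - 1) ≤ R - 1 := by nlinarith
    rcases max_cases (x * R) (y * (R - 1)) with h | h <;> rw [h.1] <;> linarith

theorem minimaxRegret'_le (R : ℝ) (hR : 1 ≤ R) : minimaxRegret' R ≤ R / 2 := by
  apply csInf_le
  · refine ⟨0, ?_⟩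
    rintro _ ⟨a, ⟨ha0, ha1⟩, rfl⟩
    apply Real.sSup_nonneg
    rintro _ ⟨⟨x, y⟩, -, rfl⟩
    simp only [regret', reward']
    have h1 := mul_le_mul_of_nonneg_left (le_max_left (x * R) (y * (R - 1))) ha0
    have h2 := mul_le_mul_of_nonneg_left (le_max_right (x * R) (y * (R - 1)))
      (sub_nonneg.2 ha1)
    linarith
  · exact ⟨1 / 2, by norm_num, maxRegret'_half R hR⟩

/-- for every `R ≥ 1`, in the modified instance the policy `a = 1/2` has max
regret `R/2`; hence the minimax regret is at most `R/2`, the gap between the max regret of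
the reward-maximizing policy `a = 1` and the minimax regret is at least `R/2 − 1`, and this
gap is unbounded as `R → ∞`. -/
theorem modified_instance_gap (R : ℝ) (hR : 1 ≤ R) :
    maxRegret' R (1 / 2) = R / 2 ∧
    minimaxRegret' R ≤ R / 2 ∧
    R / 2 - 1 ≤ maxRegret' R 1 - minimaxRegret' R ∧
    ∀ M : ℝ, ∃ R' : ℝ, 1 ≤ R' ∧ M < maxRegret' R' 1 - minimaxRegret' R' := by
  have key : ∀ S : ℝ, 1 ≤ S → S / 2 - 1 ≤ maxRegret' S 1 - minimaxRegret' S := by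
    intro S hS
    rw [maxRegret'_one S hS]
    linarith [minimaxRegret'_le S hS]
  refine ⟨maxRegret'_half R hR, minimaxRegret'_le R hR, key R hR, fun M => ?_⟩
  have hS : (1 : ℝ) ≤ 2 * |M| + 4 := by linarith [abs_nonneg M]
  exact ⟨2 * |M| + 4, hS, by linarith [key _ hS, le_abs_self M]⟩
end

section
/- Correctness of the double-oracle stopping condition: let Π' ⊆ Π and Ω' ⊆ Ω be nonempty subsets and let (σ, τ) be a Nash equilibrium of the restricted regret game on Π' × Ω'. Suppose the best pure responses over the full strategy spaces are already available in the restricted sets, i.e., min over π ∈ Π of Σ_ω τ(ω)·u(π, ω) is attained by some element of Π', and max over ω ∈ Ω of Σ_π σ(π)·u(π, ω) is attained by some element of Ω'. Then (σ, τ) is a Nash equilibrium of the full regret game: U(σ, τ') ≤ U(σ, τ) ≤ U(σ', τ) for every mixed strategy σ' on Π and every mixed strategy τ' on Ω. -/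
/-- A mixed strategy supported on the subset `S` of a finite type: nonnegative weights
summing to 1 that vanish outside `S`. -/
def IsMixedOn {α : Type*} [Fintype α] (S : Finset α) (σ : α → ℝ) : Prop :=
  (∀ x, 0 ≤ σ x) ∧ (∑ x, σ x = 1) ∧ ∀ x ∉ S, σ x = 0

/-- Expected regret `U(σ, τ) = Σ_{π, ω} σ(π)·τ(ω)·u(π, ω)` of mixed strategies. -/
def expRegret {P O : Type*} [Fintype P] [Fintype O] (u : P → O → ℝ)
    (σ : P → ℝ) (τ : O → ℝ) : ℝ :=
  ∑ π, ∑ ω, σ π * τ ω * u π ω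

/-- `(σ, τ)` is a Nash equilibrium of the regret game restricted to `P' × O'`:
the agent (minimizing) plays `σ` on `P'`, nature (maximizing) plays `τ` on `O'`, and
`U(σ, τ') ≤ U(σ, τ) ≤ U(σ', τ)` for all mixed `σ'` on `P'` and `τ'` on `O'`. -/
def NashOn {P O : Type*} [Fintype P] [Fintype O] (u : P → O → ℝ)
    (P' : Finset P) (O' : Finset O) (σ : P → ℝ) (τ : O → ℝ) : Prop :=
  IsMixedOn P' σ ∧ IsMixedOn O' τ ∧
    (∀ τ', IsMixedOn O' τ' → expRegret u σ τ' ≤ expRegret u σ τ) ∧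
    (∀ σ', IsMixedOn P' σ' → expRegret u σ τ ≤ expRegret u σ' τ)

lemma expRegret_eq_left {P O : Type*} [Fintype P] [Fintype O] (u : P → O → ℝ)
    (σ : P → ℝ) (τ : O → ℝ) :
    expRegret u σ τ = ∑ π, σ π * ∑ ω, τ ω * u π ω := by
  simp only [expRegret, Finset.mul_sum, mul_assoc]

lemma expRegret_eq_right {P O : Type*} [Fintype P] [Fintype O] (u : P → O → ℝ)
    (σ : P → ℝ) (τ : O → ℝ) :
    expRegret u σ τ = ∑ ω, τ ω * ∑ π, σ π * u π ω := by
  rw [expRegret, Finset.sum_comm]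
  simp only [Finset.mul_sum]
  exact Finset.sum_congr rfl fun _ _ => Finset.sum_congr rfl fun _ _ => by ring

open Classical in
lemma isMixedOn_single {α : Type*} [Fintype α] (S : Finset α) (a : α) (ha : a ∈ S) :
    IsMixedOn S (fun x => if x = a then (1 : ℝ) else 0) := by
  refine ⟨fun x => by positivity, by simp, fun x hx => ?_⟩
  have : x ≠ a := fun h => hx (h ▸ ha)
  simp [this]

/-- correctness of the double-oracle stopping condition. If `(σ, τ)` is a
Nash equilibrium of the restricted regret game on `P' × O'` and the best pure responses
over the full strategy spaces are already available in the restricted sets, then `(σ, τ)`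
is a Nash equilibrium of the full regret game. -/
theorem double_oracle_stopping {P O : Type*} [Fintype P] [Fintype O]
    [Nonempty P] [Nonempty O] (u : P → O → ℝ)
    (P' : Finset P) (O' : Finset O) (hP' : P'.Nonempty) (hO' : O'.Nonempty)
    (σ : P → ℝ) (τ : O → ℝ) (hNash : NashOn u P' O' σ τ)
    (hAgent : ∃ π' ∈ P', ∀ π : P, ∑ ω, τ ω * u π' ω ≤ ∑ ω, τ ω * u π ω)
    (hNature : ∃ ω' ∈ O', ∀ ω : O, ∑ π, σ π * u π ω ≤ ∑ π, σ π * u π ω') :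
    NashOn u Finset.univ Finset.univ σ τ := by
  classical
  obtain ⟨hσ, hτ, h1, h2⟩ := hNash
  obtain ⟨a, ha, hA⟩ := hAgent
  obtain ⟨b, hb, hB⟩ := hNature
  refine ⟨⟨hσ.1, hσ.2.1, by simp⟩, ⟨hτ.1, hτ.2.1, by simp⟩, fun τ' hτ' => ?_, fun σ' hσ' => ?_⟩
  · refine le_trans ?_ (h1 _ (isMixedOn_single O' b hb))
    rw [expRegret_eq_right, expRegret_eq_right]
    calc _ ≤ ∑ ω, τ' ω * ∑ π, σ π * u π b :=
          Finset.sum_le_sum fun ω _ => mul_le_mul_of_nonneg_left (hB ω) (hτ'.1 ω)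
      _ = ∑ π, σ π * u π b := by rw [← Finset.sum_mul, hτ'.2.1, one_mul]
      _ ≤ _ := by simp
  · refine le_trans (h2 _ (isMixedOn_single P' a ha)) ?_
    rw [expRegret_eq_left, expRegret_eq_left]
    calc _ ≤ ∑ ω, τ ω * u a ω := by simp
      _ = ∑ π, σ' π * ∑ ω, τ ω * u a ω := by rw [← Finset.sum_mul, hσ'.2.1, one_mul]
      _ ≤ _ := Finset.sum_le_sum fun π _ => mul_le_mul_of_nonneg_left (hA π) (hσ'.1 π)
end
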